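/- Let m and M be positive natural numbers and let s and t be multisets of vectors in ℝ^m (elements of Fin m → ℝ), each of cardinality M, such that for every coordinate index i the multiset of i-th coordinates of the members of s equals the multiset of i-th coordinates of the members of t. Then t can be obtained from s by a sequence of at most m·(M − 1) feature swaps. -/

import Mathlib

/-- A feature swap on a multiset of vectors in ℝ^m: choose two members `u, v`
and a coordinate `i`, and replace them by the vectors obtained from `u` and `v`
by exchanging their `i`-th coordinates. -/
def FeatureSwap (m : ℕ) (s t : Multiset (Fin m → ℝ)) : Prop :=
  ∃ (u v : Fin m → ℝ) (i : Fin m) (r : Multiset (Fin m → ℝ)),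
    s = u ::ₘ v ::ₘ r ∧
    t = (Function.update u i (v i)) ::ₘ (Function.update v i (u i)) ::ₘ r

/-- `SwapsWithin m K s t` means `t` can be obtained from `s` by a chain of at
most `K` single feature swaps. -/
def SwapsWithin (m : ℕ) : ℕ → Multiset (Fin m → ℝ) → Multiset (Fin m → ℝ) → Prop
  | 0 => Eq
  | K + 1 => fun s t => s = t ∨ ∃ u, FeatureSwap m s u ∧ SwapsWithin m K u t

theorem FeatureSwap.coords {m : ℕ} {s t : Multiset (Fin m → ℝ)} (h : FeatureSwap m s t)
    (j : Fin m) : s.map (fun x => x j) = t.map (fun x => x j) := by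
  obtain ⟨u, v, i, r, rfl, rfl⟩ := h
  by_cases hij : j = i
  · subst hij
    simp [Multiset.cons_swap]
  · simp [Function.update_of_ne hij]

theorem FeatureSwap.cons {m : ℕ} {s t : Multiset (Fin m → ℝ)} (h : FeatureSwap m s t)
    (w : Fin m → ℝ) : FeatureSwap m (w ::ₘ s) (w ::ₘ t) := by
  obtain ⟨u, v, i, r, rfl, rfl⟩ := h
  refine ⟨u, v, i, w ::ₘ r, ?_, ?_⟩
  · rw [Multiset.cons_swap w u, Multiset.cons_swap w v]
  · rw [Multiset.cons_swap w, Multiset.cons_swap w]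

theorem SwapsWithin.rfl' {m : ℕ} (K : ℕ) (s : Multiset (Fin m → ℝ)) : SwapsWithin m K s s := by
  cases K with
  | zero => exact (rfl : s = s)
  | succ K => exact Or.inl rfl

theorem SwapsWithin.coords {m : ℕ} (K : ℕ) : ∀ {s t : Multiset (Fin m → ℝ)},
    SwapsWithin m K s t → ∀ j : Fin m, s.map (fun x => x j) = t.map (fun x => x j) := by
  induction K with
  | zero => intro s t h j; have h' : s = t := h; rw [h']
  | succ K ih =>
    intro s t h j
    rcases h with h | ⟨u, h1, h2⟩
    · rw [h]
    · rw [h1.coords j, ih h2 j]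

theorem SwapsWithin.cons {m : ℕ} (K : ℕ) (w : Fin m → ℝ) : ∀ {s t : Multiset (Fin m → ℝ)},
    SwapsWithin m K s t → SwapsWithin m K (w ::ₘ s) (w ::ₘ t) := by
  induction K with
  | zero => intro s t h; have h' : s = t := h; rw [h']; exact SwapsWithin.rfl' _ _
  | succ K ih =>
    intro s t h
    rcases h with h | ⟨u, h1, h2⟩
    · rw [h]; exact SwapsWithin.rfl' _ _
    · exact Or.inr ⟨_, h1.cons w, ih h2⟩

theorem SwapsWithin.mono {m : ℕ} (K : ℕ) : ∀ {L : ℕ} {s t : Multiset (Fin m → ℝ)}, K ≤ L →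
    SwapsWithin m K s t → SwapsWithin m L s t := by
  induction K with
  | zero => intro L s t _ h; have h' : s = t := h; rw [h']; exact SwapsWithin.rfl' _ _
  | succ K ih =>
    intro L s t hL h
    obtain ⟨L, rfl⟩ : ∃ L', L = L' + 1 := ⟨L - 1, by omega⟩
    rcases h with h | ⟨u, h1, h2⟩
    · exact Or.inl h
    · exact Or.inr ⟨_, h1, ih (by omega) h2⟩

theorem SwapsWithin.trans' {m : ℕ} (K L : ℕ) : ∀ {s t u : Multiset (Fin m → ℝ)},
    SwapsWithin m K s t → SwapsWithin m L t u → SwapsWithin m (K + L) s u := by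
  induction K with
  | zero =>
    intro s t u h h2
    have h' : s = t := h
    rw [h']; exact h2.mono _ (by omega)
  | succ K ih =>
    intro s t u h h3
    rcases h with h | ⟨v, h1, h2⟩
    · rw [h]; exact h3.mono _ (by omega)
    · have : K + 1 + L = (K + L) + 1 := by omega
      rw [this]
      exact Or.inr ⟨_, h1, ih h2 h3⟩

theorem SwapsWithin.fix {m : ℕ} (w u : Fin m → ℝ) (s : Multiset (Fin m → ℝ))
    (hw : ∀ i, w i ∈ (u ::ₘ s).map (fun x => x i)) (I : Finset (Fin m)) :
    ∃ u' s', SwapsWithin m I.card (u ::ₘ s) (u' ::ₘ s') ∧ ∀ i ∈ I, u' i = w i := by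
  induction I using Finset.induction_on with
  | empty => exact ⟨u, s, SwapsWithin.rfl' _ _, by simp⟩
  | insert j I hj ih =>
    obtain ⟨u', s', h1, h2⟩ := ih
    rw [Finset.card_insert_of_notMem hj]
    have h3 := hw j
    rw [h1.coords _ j, Multiset.map_cons, Multiset.mem_cons] at h3
    rcases h3 with h3 | h3
    · refine ⟨u', s', h1.mono _ (by omega), ?_⟩
      intro i hi
      rcases Finset.mem_insert.1 hi with rfl | hi
      · exact h3.symm
      · exact h2 i hi
    · obtain ⟨v, hv, hvj⟩ := Multiset.mem_map.1 h3
      obtain ⟨r, rfl⟩ := Multiset.exists_cons_of_mem hv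
      refine ⟨Function.update u' j (v j), Function.update v j (u' j) ::ₘ r,
        h1.trans' _ 1 (Or.inr ⟨_, ⟨u', v, j, r, rfl, rfl⟩, rfl⟩), ?_⟩
      intro i hi
      by_cases hij : i = j
      · subst hij; simpa using hvj
      · rw [Function.update_of_ne hij]
        exact h2 i ((Finset.mem_insert.1 hi).resolve_left hij)

theorem SwapsWithin.main_aux (m n : ℕ) : ∀ s t : Multiset (Fin m → ℝ),
    Multiset.card s = n + 1 → Multiset.card t = n + 1 →
    (∀ i : Fin m, s.map (fun x => x i) = t.map (fun x => x i)) →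
    SwapsWithin m (m * n) s t := by
  induction n with
  | zero =>
    intro s t hs ht h
    obtain ⟨u, rfl⟩ := Multiset.card_eq_one.1 hs
    obtain ⟨w, rfl⟩ := Multiset.card_eq_one.1 ht
    have : u = w := by
      funext i
      simpa using h i
    rw [this]; exact SwapsWithin.rfl' _ _
  | succ n ih =>
    intro s t hs ht h
    obtain ⟨u, s, rfl⟩ := Multiset.card_pos_iff_exists_mem.1 (by omega : 0 < Multiset.card s)
      |>.imp fun _ h => Multiset.exists_cons_of_mem h
    obtain ⟨w, t, rfl⟩ := Multiset.card_pos_iff_exists_mem.1 (by omega : 0 < Multiset.card t)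
      |>.imp fun _ h => Multiset.exists_cons_of_mem h
    obtain ⟨u', s', h1, h2⟩ := SwapsWithin.fix w u s (fun i => by rw [h i]; simp) Finset.univ
    have hu : u' = w := funext fun i => h2 i (Finset.mem_univ i)
    subst hu
    rw [Finset.card_univ, Fintype.card_fin] at h1
    have hc : ∀ i : Fin m, s'.map (fun x => x i) = t.map (fun x => x i) := by
      intro i
      have := (h1.coords _ i).symm.trans (h i)
      simpa using this
    have ht' : Multiset.card t = n + 1 := by simpa using ht
    by_cases hm : m = 0
    · subst hm
      have : u ::ₘ s = u' ::ₘ t := by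
        have e1 := Multiset.eq_replicate_card (a := u') (s := u ::ₘ s)
        have e2 := Multiset.eq_replicate_card (a := u') (s := u' ::ₘ t)
        rw [e1.2 fun b _ => Subsingleton.elim _ _, e2.2 fun b _ => Subsingleton.elim _ _, hs, ht]
      rw [this]; exact SwapsWithin.rfl' _ _
    · have hs' : Multiset.card s' = n + 1 := by
        have := congrArg Multiset.card (hc ⟨0, by omega⟩)
        simpa [ht'] using this
      have := h1.trans' _ _ ((ih s' t hs' ht' hc).cons _ u')
      exact this.mono _ (by rw [Nat.mul_succ]; omega)

/-- If two multisets of M vectors in ℝ^m have, for every coordinate, the same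
multiset of that coordinate's values, then one can be obtained from the other
by at most m·(M − 1) feature swaps. -/
theorem swapEquivalent_within_bound_of_coordinateMultisets_eq
    (m M : ℕ) (hm : 0 < m) (hM : 0 < M)
    (s t : Multiset (Fin m → ℝ))
    (hsc : Multiset.card s = M) (htc : Multiset.card t = M)
    (h : ∀ i : Fin m, s.map (fun x => x i) = t.map (fun x => x i)) :
    SwapsWithin m (m * (M - 1)) s t :=  by
  exact SwapsWithin.main_aux m (M - 1) s t (by omega) (by omega) h
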